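/- arXiv:1701.04915 — 6 statements merged into one kernel-verified Lean document; each statement's English description precedes it below -/
import Mathlib

section
/- Strengthening: if Δ is a finite multiset of A-formulas and the sequent ⊢Δ is provable in the additive propositional proof system, then there exists a formula B ∈ Δ such that the singleton sequent ⊢B is provable. -/
/-- A-formulas: purely additive propositional formulas built from
conjunction, truth, disjunction, and false (no atoms). -/
inductive AForm : Type
  | conj : AForm → AForm → AForm   -- ∧
  | tt   : AForm                   -- t (unit of ∧)
  | disj : AForm → AForm → AForm   -- ∨
  | ff   : AForm                   -- f (unit of ∨)
  deriving DecidableEq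

/-- Provability of one-sided sequents ⊢Δ (Δ a finite multiset of A-formulas)
in the purely additive propositional proof system. -/
inductive AProv : Multiset AForm → Prop
  | conj {B₁ B₂ : AForm} {Δ : Multiset AForm} :
      AProv (B₁ ::ₘ Δ) → AProv (B₂ ::ₘ Δ) → AProv (AForm.conj B₁ B₂ ::ₘ Δ)
  | tt {Δ : Multiset AForm} : AProv (AForm.tt ::ₘ Δ)
  | disjL {B₁ B₂ : AForm} {Δ : Multiset AForm} :
      AProv (B₁ ::ₘ Δ) → AProv (AForm.disj B₁ B₂ ::ₘ Δ)
  | disjR {B₁ B₂ : AForm} {Δ : Multiset AForm} :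
      AProv (B₂ ::ₘ Δ) → AProv (AForm.disj B₁ B₂ ::ₘ Δ)

/-- Strengthening: if ⊢Δ is provable then some B ∈ Δ satisfies ⊢B. -/
theorem strengthening (Δ : Multiset AForm) (h : AProv Δ) :
    ∃ B ∈ Δ, AProv {B} := by
  induction h with
  | @conj B₁ B₂ Δ _ _ ih₁ ih₂ =>
    obtain ⟨C, hC, pC⟩ := ih₁
    obtain ⟨D, hD, pD⟩ := ih₂
    rcases Multiset.mem_cons.1 hC with rfl | hC
    · rcases Multiset.mem_cons.1 hD with rfl | hD
      · exact ⟨_, Multiset.mem_cons_self _ _, AProv.conj (Δ := 0) pC pD⟩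
      · exact ⟨D, Multiset.mem_cons_of_mem hD, pD⟩
    · exact ⟨C, Multiset.mem_cons_of_mem hC, pC⟩
  | tt => exact ⟨_, Multiset.mem_cons_self _ _, AProv.tt (Δ := 0)⟩
  | disjL _ ih =>
    obtain ⟨C, hC, pC⟩ := ih
    rcases Multiset.mem_cons.1 hC with rfl | hC
    · exact ⟨_, Multiset.mem_cons_self _ _, AProv.disjL (Δ := 0) pC⟩
    · exact ⟨C, Multiset.mem_cons_of_mem hC, pC⟩
  | disjR _ ih =>
    obtain ⟨C, hC, pC⟩ := ih
    rcases Multiset.mem_cons.1 hC with rfl | hC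
    · exact ⟨_, Multiset.mem_cons_self _ _, AProv.disjR (Δ := 0) pC⟩
    · exact ⟨C, Multiset.mem_cons_of_mem hC, pC⟩
end

section
/- Weakening and contraction admissibility: if Δ₁ and Δ₂ are finite multisets of A-formulas such that every formula occurring in Δ₁ also occurs in Δ₂ (i.e., Δ₁ is a subset of Δ₂ when both are viewed as sets), and the sequent ⊢Δ₁ is provable in the additive propositional proof system, then ⊢Δ₂ is also provable. -/
def AForm.val : AForm → Prop
  | .conj a b => a.val ∧ b.val
  | .tt => True
  | .disj a b => a.val ∨ b.val
  | .ff => False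

theorem AProv.sound {Δ : Multiset AForm} (h : AProv Δ) : ∃ B ∈ Δ, B.val := by
  induction h with
  | conj _ _ ih1 ih2 =>
    simp only [Multiset.mem_cons, exists_eq_or_imp, AForm.val] at *
    tauto
  | tt => exact ⟨_, Multiset.mem_cons_self _ _, trivial⟩
  | disjL _ ih =>
    simp only [Multiset.mem_cons, exists_eq_or_imp, AForm.val] at *
    tauto
  | disjR _ ih =>
    simp only [Multiset.mem_cons, exists_eq_or_imp, AForm.val] at *
    tauto

theorem AProv.complete (B : AForm) (h : B.val) (Δ : Multiset AForm) : AProv (B ::ₘ Δ) := by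
  induction B with
  | conj a b iha ihb => exact .conj (iha h.1) (ihb h.2)
  | tt => exact .tt
  | disj a b iha ihb =>
    rcases h with h | h
    · exact .disjL (iha h)
    · exact .disjR (ihb h)
  | ff => exact h.elim

/-- Weakening and contraction admissibility: if Δ₁ ⊆ Δ₂ as sets and ⊢Δ₁
is provable, then ⊢Δ₂ is provable. -/
theorem weakening_contraction_admissibility (Δ₁ Δ₂ : Multiset AForm)
    (hsub : ∀ B : AForm, B ∈ Δ₁ → B ∈ Δ₂) (h : AProv Δ₁) : AProv Δ₂ := by
  obtain ⟨B, hB, hv⟩ := h.sound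
  obtain ⟨Δ, rfl⟩ := Multiset.exists_cons_of_mem (hsub B hB)
  exact AProv.complete B hv Δ
end

section
/- First-order strengthening: fix a ranked signature Σ admitting at least one closed Σ-term. If Δ is a finite multiset of closed first-order additive formulas over Σ and the sequent ⊢Δ is provable in the first-order additive proof system with the extensional ∀-rule, then there exists a formula B ∈ Δ such that ⊢B is provable. -/
/-- Terms over a ranked signature `σ` with arity function `ar`,
with de Bruijn variables for quantifier binding. -/
inductive Tm (σ : Type) (ar : σ → ℕ) : Type
  | var : ℕ → Tm σ ar
  | app : (f : σ) → (Fin (ar f) → Tm σ ar) → Tm σ ar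

namespace Tm

variable {σ : Type} {ar : σ → ℕ}

/-- A term is closed under `k` binders if all its de Bruijn variables are below `k`. -/
def ClosedUnder (k : ℕ) : Tm σ ar → Prop
  | var n => n < k
  | app _ args => ∀ i, ClosedUnder k (args i)

/-- A closed Σ-term: one with no variables at all. -/
def Closed (t : Tm σ ar) : Prop := ClosedUnder 0 t

/-- Substitute the (closed) term `u` for de Bruijn variable `k`. -/
def subst (k : ℕ) (u : Tm σ ar) : Tm σ ar → Tm σ ar
  | var n => if n = k then u else var n
  | app f args => app f (fun i => subst k u (args i))

end Tm

/-- First-order additive formulas over the signature: equations and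
inequations between terms, additive connectives, and quantifiers
(de Bruijn style binding). -/
inductive Fm (σ : Type) (ar : σ → ℕ) : Type
  | eq   : Tm σ ar → Tm σ ar → Fm σ ar   -- s = t
  | ne   : Tm σ ar → Tm σ ar → Fm σ ar   -- s ≠ t
  | conj : Fm σ ar → Fm σ ar → Fm σ ar   -- ∧
  | tt   : Fm σ ar                        -- t
  | disj : Fm σ ar → Fm σ ar → Fm σ ar   -- ∨
  | ff   : Fm σ ar                        -- f
  | all  : Fm σ ar → Fm σ ar             -- ∀
  | ex   : Fm σ ar → Fm σ ar             -- ∃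

namespace Fm

variable {σ : Type} {ar : σ → ℕ}

/-- A formula is closed under `k` binders. -/
def ClosedUnder : ℕ → Fm σ ar → Prop
  | k, eq s t => s.ClosedUnder k ∧ t.ClosedUnder k
  | k, ne s t => s.ClosedUnder k ∧ t.ClosedUnder k
  | k, conj B C => ClosedUnder k B ∧ ClosedUnder k C
  | _, tt => True
  | k, disj B C => ClosedUnder k B ∧ ClosedUnder k C
  | _, ff => True
  | k, all B => ClosedUnder (k + 1) B
  | k, ex B => ClosedUnder (k + 1) B

/-- A closed formula: no free variables. -/
def Closed (B : Fm σ ar) : Prop := ClosedUnder 0 B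

/-- Capture-avoiding substitution of the closed term `u` for de Bruijn
variable `k` in a formula. -/
def subst (k : ℕ) (u : Tm σ ar) : Fm σ ar → Fm σ ar
  | eq s t => eq (s.subst k u) (t.subst k u)
  | ne s t => ne (s.subst k u) (t.subst k u)
  | conj B C => conj (subst k u B) (subst k u C)
  | tt => tt
  | disj B C => disj (subst k u B) (subst k u C)
  | ff => ff
  | all B => all (subst (k + 1) u B)
  | ex B => ex (subst (k + 1) u B)

end Fm

/-- Provability of one-sided sequents ⊢Δ of closed first-order additive
formulas, with the extensional (infinite-premise) rule for ∀. -/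
inductive FProv {σ : Type} {ar : σ → ℕ} : Multiset (Fm σ ar) → Prop
  | conj {B₁ B₂ : Fm σ ar} {Δ : Multiset (Fm σ ar)} :
      FProv (B₁ ::ₘ Δ) → FProv (B₂ ::ₘ Δ) → FProv (Fm.conj B₁ B₂ ::ₘ Δ)
  | tt {Δ : Multiset (Fm σ ar)} : FProv (Fm.tt ::ₘ Δ)
  | disjL {B₁ B₂ : Fm σ ar} {Δ : Multiset (Fm σ ar)} :
      FProv (B₁ ::ₘ Δ) → FProv (Fm.disj B₁ B₂ ::ₘ Δ)
  | disjR {B₁ B₂ : Fm σ ar} {Δ : Multiset (Fm σ ar)} :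
      FProv (B₂ ::ₘ Δ) → FProv (Fm.disj B₁ B₂ ::ₘ Δ)
  | eq {t : Tm σ ar} {Δ : Multiset (Fm σ ar)} :
      t.Closed → FProv (Fm.eq t t ::ₘ Δ)
  | ne {t s : Tm σ ar} {Δ : Multiset (Fm σ ar)} :
      t.Closed → s.Closed → t ≠ s → FProv (Fm.ne t s ::ₘ Δ)
  | ex {B : Fm σ ar} {t : Tm σ ar} {Δ : Multiset (Fm σ ar)} :
      t.Closed → FProv (B.subst 0 t ::ₘ Δ) → FProv (Fm.ex B ::ₘ Δ)
  | all {B : Fm σ ar} {Δ : Multiset (Fm σ ar)} :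
      (∀ t : Tm σ ar, t.Closed → FProv (B.subst 0 t ::ₘ Δ)) →
      FProv (Fm.all B ::ₘ Δ)

/-- First-order strengthening: over a signature admitting a closed term,
if Δ is a multiset of closed formulas and ⊢Δ is provable, then ⊢B is
provable for some B ∈ Δ. -/
theorem fo_strengthening {σ : Type} {ar : σ → ℕ}
    (hσ : ∃ t : Tm σ ar, t.Closed)
    (Δ : Multiset (Fm σ ar)) (hΔ : ∀ B ∈ Δ, Fm.Closed B)
    (h : FProv Δ) : ∃ B ∈ Δ, FProv {B} := by
  clear hΔ
  have key : ∀ {B C : Fm σ ar} {Γ : Multiset (Fm σ ar)},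
      (∃ D ∈ B ::ₘ Γ, FProv {D}) → (FProv {B} → ∃ D ∈ C ::ₘ Γ, FProv {D}) →
      ∃ D ∈ C ::ₘ Γ, FProv {D} := by
    rintro B C Γ ⟨D, hD, hp⟩ hk
    rcases Multiset.mem_cons.1 hD with rfl | hD
    · exact hk hp
    · exact ⟨D, Multiset.mem_cons_of_mem hD, hp⟩
  induction h with
  | conj _ _ ih1 ih2 =>
    exact key ih1 fun h1 => key ih2 fun h2 =>
      ⟨_, Multiset.mem_cons_self _ _, FProv.conj (Δ := 0) h1 h2⟩
  | tt => exact ⟨_, Multiset.mem_cons_self _ _, FProv.tt (Δ := 0)⟩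
  | disjL _ ih =>
    exact key ih fun h1 => ⟨_, Multiset.mem_cons_self _ _, FProv.disjL (Δ := 0) h1⟩
  | disjR _ ih =>
    exact key ih fun h1 => ⟨_, Multiset.mem_cons_self _ _, FProv.disjR (Δ := 0) h1⟩
  | eq ht => exact ⟨_, Multiset.mem_cons_self _ _, FProv.eq (Δ := 0) ht⟩
  | ne ht hs hn => exact ⟨_, Multiset.mem_cons_self _ _, FProv.ne (Δ := 0) ht hs hn⟩
  | ex ht _ ih =>
    exact key ih fun h1 => ⟨_, Multiset.mem_cons_self _ _, FProv.ex (Δ := 0) ht h1⟩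
  | @all B Γ _ ih =>
    by_cases hG : ∃ D ∈ Γ, FProv {D}
    · obtain ⟨D, hD, hp⟩ := hG
      exact ⟨D, Multiset.mem_cons_of_mem hD, hp⟩
    · refine ⟨_, Multiset.mem_cons_self _ _, FProv.all (Δ := 0) fun t ht => ?_⟩
      obtain ⟨D, hD, hp⟩ := ih t ht
      rcases Multiset.mem_cons.1 hD with rfl | hD
      · exact hp
      · exact absurd ⟨D, hD, hp⟩ hG
end

section
/- First-order weakening and contraction admissibility: fix a ranked signature Σ admitting at least one closed Σ-term. If Δ₁ and Δ₂ are finite multisets of closed first-order additive formulas over Σ such that every formula occurring in Δ₁ also occurs in Δ₂ (Δ₁ ⊆ Δ₂ as sets), and ⊢Δ₁ is provable in the first-order additive proof system with the extensional ∀-rule, then ⊢Δ₂ is provable. -/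
theorem FProv.exists_strong {σ : Type} {ar : σ → ℕ} {Δ : Multiset (Fm σ ar)} (h : FProv Δ) :
    ∃ B ∈ Δ, ∀ Γ : Multiset (Fm σ ar), FProv (B ::ₘ Γ) := by
  induction h with
  | tt => exact ⟨_, Multiset.mem_cons_self _ _, fun _ => FProv.tt⟩
  | eq ht => exact ⟨_, Multiset.mem_cons_self _ _, fun _ => FProv.eq ht⟩
  | ne ht hs hn => exact ⟨_, Multiset.mem_cons_self _ _, fun _ => FProv.ne ht hs hn⟩
  | conj _ _ ih₁ ih₂ =>
    obtain ⟨B, hB, h1⟩ := ih₁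
    obtain ⟨C, hC, h2⟩ := ih₂
    rcases Multiset.mem_cons.1 hB with rfl | hB
    · rcases Multiset.mem_cons.1 hC with rfl | hC
      · exact ⟨_, Multiset.mem_cons_self _ _, fun Γ => FProv.conj (h1 Γ) (h2 Γ)⟩
      · exact ⟨C, Multiset.mem_cons_of_mem hC, h2⟩
    · exact ⟨B, Multiset.mem_cons_of_mem hB, h1⟩
  | disjL _ ih =>
    obtain ⟨B, hB, h1⟩ := ih
    rcases Multiset.mem_cons.1 hB with rfl | hB
    · exact ⟨_, Multiset.mem_cons_self _ _, fun Γ => FProv.disjL (h1 Γ)⟩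
    · exact ⟨B, Multiset.mem_cons_of_mem hB, h1⟩
  | disjR _ ih =>
    obtain ⟨B, hB, h1⟩ := ih
    rcases Multiset.mem_cons.1 hB with rfl | hB
    · exact ⟨_, Multiset.mem_cons_self _ _, fun Γ => FProv.disjR (h1 Γ)⟩
    · exact ⟨B, Multiset.mem_cons_of_mem hB, h1⟩
  | ex ht _ ih =>
    obtain ⟨B, hB, h1⟩ := ih
    rcases Multiset.mem_cons.1 hB with rfl | hB
    · exact ⟨_, Multiset.mem_cons_self _ _, fun Γ => FProv.ex ht (h1 Γ)⟩
    · exact ⟨B, Multiset.mem_cons_of_mem hB, h1⟩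
  | @all A Δ _ ih =>
    by_cases hΔ : ∃ B ∈ Δ, ∀ Γ : Multiset (Fm σ ar), FProv (B ::ₘ Γ)
    · obtain ⟨B, hB, h1⟩ := hΔ
      exact ⟨B, Multiset.mem_cons_of_mem hB, h1⟩
    · refine ⟨_, Multiset.mem_cons_self _ _, fun Γ => FProv.all fun t ht => ?_⟩
      obtain ⟨B, hB, h1⟩ := ih t ht
      rcases Multiset.mem_cons.1 hB with rfl | hB
      · exact h1 Γ
      · exact absurd ⟨B, hB, h1⟩ hΔ

/-- First-order weakening and contraction admissibility. -/
theorem fo_weakening_contraction_admissibility {σ : Type} {ar : σ → ℕ}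
    (hσ : ∃ t : Tm σ ar, t.Closed)
    (Δ₁ Δ₂ : Multiset (Fm σ ar))
    (hΔ₁ : ∀ B ∈ Δ₁, Fm.Closed B) (hΔ₂ : ∀ B ∈ Δ₂, Fm.Closed B)
    (hsub : ∀ B : Fm σ ar, B ∈ Δ₁ → B ∈ Δ₂)
    (h : FProv Δ₁) : FProv Δ₂ := by
  obtain ⟨B, hB, h1⟩ := h.exists_strong
  obtain ⟨Γ, rfl⟩ := Multiset.exists_cons_of_mem (hsub B hB)
  exact h1 Γ
end

section
/- First-order cut admissibility: fix a ranked signature Σ admitting at least one closed Σ-term. Let B be a closed first-order additive formula over Σ and let Δ₁, Δ₂ be finite multisets of closed first-order additive formulas over Σ. If both ⊢B,Δ₁ and ⊢¬B,Δ₂ are provable in the first-order additive proof system with the extensional ∀-rule (where ¬B is the negation normal form of the negation of B), then ⊢Δ₁,Δ₂ (the multiset union) is provable. -/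
/-- Negation normal form of the negation of a formula, by de Morgan duality. -/
def Fm.neg {σ : Type} {ar : σ → ℕ} : Fm σ ar → Fm σ ar
  | Fm.eq s t => Fm.ne s t
  | Fm.ne s t => Fm.eq s t
  | Fm.conj B C => Fm.disj B.neg C.neg
  | Fm.tt => Fm.ff
  | Fm.disj B C => Fm.conj B.neg C.neg
  | Fm.ff => Fm.tt
  | Fm.all B => Fm.ex B.neg
  | Fm.ex B => Fm.all B.neg

/-- Truth of closed formulas. -/
inductive Tr {σ : Type} {ar : σ → ℕ} : Fm σ ar → Prop
  | conj {B C : Fm σ ar} : Tr B → Tr C → Tr (Fm.conj B C)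
  | tt : Tr Fm.tt
  | disjL {B C : Fm σ ar} : Tr B → Tr (Fm.disj B C)
  | disjR {B C : Fm σ ar} : Tr C → Tr (Fm.disj B C)
  | eq {t : Tm σ ar} : t.Closed → Tr (Fm.eq t t)
  | ne {t s : Tm σ ar} : t.Closed → s.Closed → t ≠ s → Tr (Fm.ne t s)
  | ex {B : Fm σ ar} {t : Tm σ ar} : t.Closed → Tr (B.subst 0 t) → Tr (Fm.ex B)
  | all {B : Fm σ ar} : (∀ t : Tm σ ar, t.Closed → Tr (B.subst 0 t)) → Tr (Fm.all B)

theorem neg_subst_comm {σ : Type} {ar : σ → ℕ} (u : Tm σ ar) (B : Fm σ ar) :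
    ∀ k, (B.subst k u).neg = B.neg.subst k u := by
  induction B <;> intro k <;> simp_all [Fm.neg, Fm.subst]

theorem Tr.consistent {σ : Type} {ar : σ → ℕ} {B : Fm σ ar} (h : Tr B) :
    Tr B.neg → False := by
  induction h with
  | conj _ _ ih1 ih2 =>
    intro h
    simp only [Fm.neg] at h
    cases h with
    | disjL h => exact ih1 h
    | disjR h => exact ih2 h
  | tt => intro h; simp only [Fm.neg] at h; cases h
  | disjL _ ih => intro h; simp only [Fm.neg] at h; cases h with | conj a b => exact ih a
  | disjR _ ih => intro h; simp only [Fm.neg] at h; cases h with | conj a b => exact ih b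
  | eq _ => intro h; simp only [Fm.neg] at h; cases h with | ne _ _ h => exact h rfl
  | ne _ _ hn => intro h; simp only [Fm.neg] at h; cases h; exact hn rfl
  | ex ht _ ih =>
    intro h; simp only [Fm.neg] at h
    cases h with | all h => exact ih (by rw [neg_subst_comm]; exact h _ ht)
  | all _ ih =>
    intro h; simp only [Fm.neg] at h
    cases h with | ex ht h => exact ih _ ht (by rw [neg_subst_comm]; exact h)

theorem Tr.prov {σ : Type} {ar : σ → ℕ} {B : Fm σ ar} (h : Tr B)
    (Δ : Multiset (Fm σ ar)) : FProv (B ::ₘ Δ) := by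
  induction h with
  | conj _ _ ih1 ih2 => exact .conj ih1 ih2
  | tt => exact .tt
  | disjL _ ih => exact .disjL ih
  | disjR _ ih => exact .disjR ih
  | eq h => exact .eq h
  | ne h1 h2 h3 => exact .ne h1 h2 h3
  | ex ht _ ih => exact .ex ht ih
  | all _ ih => exact .all ih

theorem FProv.sound {σ : Type} {ar : σ → ℕ} {Δ : Multiset (Fm σ ar)} (h : FProv Δ) :
    ∃ C ∈ Δ, Tr C := by
  induction h with
  | conj _ _ ih1 ih2 =>
    simp only [Multiset.mem_cons, exists_eq_or_imp] at *
    rcases ih1 with a | a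
    · rcases ih2 with b | b
      · exact .inl (.conj a b)
      · exact .inr b
    · exact .inr a
  | tt => exact ⟨_, Multiset.mem_cons_self _ _, .tt⟩
  | disjL _ ih =>
    simp only [Multiset.mem_cons, exists_eq_or_imp] at *
    exact ih.imp .disjL id
  | disjR _ ih =>
    simp only [Multiset.mem_cons, exists_eq_or_imp] at *
    exact ih.imp .disjR id
  | eq h => exact ⟨_, Multiset.mem_cons_self _ _, .eq h⟩
  | ne h1 h2 h3 => exact ⟨_, Multiset.mem_cons_self _ _, .ne h1 h2 h3⟩
  | ex ht _ ih =>
    simp only [Multiset.mem_cons, exists_eq_or_imp] at *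
    exact ih.imp (.ex ht) id
  | @all B Δ _ ih =>
    simp only [Multiset.mem_cons, exists_eq_or_imp] at *
    by_cases hd : ∃ C ∈ Δ, Tr C
    · exact .inr hd
    · exact .inl (.all fun t ht => (ih t ht).resolve_right hd)

/-- First-order cut admissibility. -/
theorem fo_cut_admissibility {σ : Type} {ar : σ → ℕ}
    (hσ : ∃ t : Tm σ ar, t.Closed)
    (B : Fm σ ar) (hB : B.Closed)
    (Δ₁ Δ₂ : Multiset (Fm σ ar))
    (hΔ₁ : ∀ C ∈ Δ₁, Fm.Closed C) (hΔ₂ : ∀ C ∈ Δ₂, Fm.Closed C)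
    (h₁ : FProv (B ::ₘ Δ₁)) (h₂ : FProv (B.neg ::ₘ Δ₂)) :
    FProv (Δ₁ + Δ₂) := by
  have key : ∃ C ∈ Δ₁ + Δ₂, Tr C := by
    have a := h₁.sound
    have b := h₂.sound
    simp only [Multiset.mem_cons, exists_eq_or_imp] at a b
    rcases a with a | ⟨C, hC, a⟩
    · rcases b with b | ⟨C, hC, b⟩
      · exact (a.consistent b).elim
      · exact ⟨C, Multiset.mem_add.2 (.inr hC), b⟩
    · exact ⟨C, Multiset.mem_add.2 (.inl hC), a⟩
  obtain ⟨C, hC, hT⟩ := key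
  obtain ⟨Γ, hΓ⟩ := Multiset.exists_cons_of_mem hC
  rw [hΓ]
  exact hT.prov Γ
end

section
/- Failure of strengthening in the multiplicative setting: in the two-sided sequent calculus consisting of the additive propositional rules together with the right introduction rule for intuitionistic implication (from Γ,A ⊢ B,Δ infer Γ ⊢ A⊃B,Δ) and the initial rule (Γ,p ⊢ p,Δ for atoms p), the sequent ⊢ p⊃q, p is provable, while neither ⊢ p⊃q nor ⊢ p is provable (where p and q are distinct propositional atoms). -/
/-- Propositional formulas with atoms, the additive connectives
∧, t, ∨, f, and intuitionistic implication ⊃. -/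
inductive PForm : Type
  | atom : ℕ → PForm
  | conj : PForm → PForm → PForm   -- ∧
  | tt   : PForm                   -- t
  | disj : PForm → PForm → PForm   -- ∨
  | ff   : PForm                   -- f
  | imp  : PForm → PForm → PForm   -- ⊃
  deriving DecidableEq

/-- Two-sided sequent calculus Γ ⊢ Δ with the additive right rules for
∧, t, ∨, the right introduction rule for implication, and the initial
rule for atoms. -/
inductive PSeq : Multiset PForm → Multiset PForm → Prop
  | conjR {Γ : Multiset PForm} {B₁ B₂ : PForm} {Δ : Multiset PForm} :
      PSeq Γ (B₁ ::ₘ Δ) → PSeq Γ (B₂ ::ₘ Δ) → PSeq Γ (PForm.conj B₁ B₂ ::ₘ Δ)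
  | ttR {Γ Δ : Multiset PForm} : PSeq Γ (PForm.tt ::ₘ Δ)
  | disjRL {Γ : Multiset PForm} {B₁ B₂ : PForm} {Δ : Multiset PForm} :
      PSeq Γ (B₁ ::ₘ Δ) → PSeq Γ (PForm.disj B₁ B₂ ::ₘ Δ)
  | disjRR {Γ : Multiset PForm} {B₁ B₂ : PForm} {Δ : Multiset PForm} :
      PSeq Γ (B₂ ::ₘ Δ) → PSeq Γ (PForm.disj B₁ B₂ ::ₘ Δ)
  | impR {Γ : Multiset PForm} {A B : PForm} {Δ : Multiset PForm} :
      PSeq (A ::ₘ Γ) (B ::ₘ Δ) → PSeq Γ (PForm.imp A B ::ₘ Δ)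
  | init {Γ Δ : Multiset PForm} {n : ℕ} :
      PSeq (PForm.atom n ::ₘ Γ) (PForm.atom n ::ₘ Δ)

/-- Classical truth of a formula under a valuation. -/
def PForm.ev (v : ℕ → Prop) : PForm → Prop
  | .atom n => v n
  | .conj A B => A.ev v ∧ B.ev v
  | .tt => True
  | .disj A B => A.ev v ∨ B.ev v
  | .ff => False
  | .imp A B => A.ev v → B.ev v

/-- Classical soundness. -/
theorem PSeq.sound (v : ℕ → Prop) {Γ Δ : Multiset PForm} (h : PSeq Γ Δ) :
    (∀ A ∈ Γ, A.ev v) → ∃ B ∈ Δ, B.ev v := by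
  induction h with
  | conjR _ _ ih1 ih2 =>
    intro hG
    have h1 := ih1 hG
    have h2 := ih2 hG
    simp only [Multiset.mem_cons, exists_eq_or_imp, PForm.ev] at *
    tauto
  | ttR => intro _; exact ⟨_, Multiset.mem_cons_self _ _, trivial⟩
  | disjRL _ ih =>
    intro hG
    have h1 := ih hG
    simp only [Multiset.mem_cons, exists_eq_or_imp, PForm.ev] at *
    tauto
  | disjRR _ ih =>
    intro hG
    have h1 := ih hG
    simp only [Multiset.mem_cons, exists_eq_or_imp, PForm.ev] at *
    tauto
  | impR _ ih =>
    intro hG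
    simp only [Multiset.mem_cons, exists_eq_or_imp, forall_eq_or_imp, PForm.ev] at *
    tauto
  | init =>
    intro hG
    exact ⟨_, Multiset.mem_cons_self _ _, hG _ (Multiset.mem_cons_self _ _)⟩

/-- Failure of strengthening in the multiplicative setting: for distinct
atoms p and q, the sequent ⊢ p⊃q, p is provable while neither ⊢ p⊃q nor
⊢ p is provable. -/
theorem strengthening_fails (p q : ℕ) (hpq : p ≠ q) :
    PSeq 0 {PForm.imp (PForm.atom p) (PForm.atom q), PForm.atom p} ∧
    ¬ PSeq 0 {PForm.imp (PForm.atom p) (PForm.atom q)} ∧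
    ¬ PSeq 0 {PForm.atom p} := by
  refine ⟨PSeq.impR ?_, fun h => ?_, fun h => ?_⟩
  · have h : PSeq (PForm.atom p ::ₘ 0) (PForm.atom p ::ₘ {PForm.atom q}) := PSeq.init
    exact (congrArg (PSeq _) (Multiset.pair_comm (PForm.atom p) (PForm.atom q))).mp h
  · have := h.sound (fun n => n = p) (by simp)
    simp [PForm.ev] at this
    exact hpq this.symm
  · have := h.sound (fun _ => False) (by simp)
    simp [PForm.ev] at this
end
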